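/- For every compact set K ⊂ ℂ, the set {F ∈ X(K) : every element of F is simple} is a Borel subset of the metric space (X(K), d_X). -/

import Mathlib

noncomputable section

open Set Filter Metric MeasureTheory
open scoped Classical

/-- A loop: a continuous `1`-periodic map `ℝ → ℂ`, viewed as a continuous map from the
circle `S¹ = ℝ/ℤ` to the complex plane. -/
structure Loop where
  toFun : ℝ → ℂ
  continuous_toFun : Continuous toFun
  periodic_toFun : Function.Periodic toFun 1

/-- Lifts of orientation-preserving homeomorphisms of the circle `ℝ/ℤ`: continuous strictly
increasing maps of `ℝ` commuting with translation by `1`. -/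
def CircleMaps : Set (ℝ → ℝ) :=
  {φ | Continuous φ ∧ StrictMono φ ∧ ∀ t, φ (t + 1) = φ t + 1}

/-- The supremum distance between loops, up to orientation-preserving reparametrization:
`d_Γ(γ, γ') = inf_{φ,ψ} sup_t |γ(φ t) - γ'(ψ t)|`. -/
def dGamma (γ γ' : Loop) : ℝ :=
  sInf {r : ℝ | 0 ≤ r ∧ ∃ φ ∈ CircleMaps, ∃ ψ ∈ CircleMaps,
    ∀ t : ℝ, dist (γ.toFun (φ t)) (γ'.toFun (ψ t)) ≤ r}

/-- Loops at `d_Γ`-distance zero are identified. -/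
def loopRel (γ γ' : Loop) : Prop := dGamma γ γ' = 0

/-- The space `Γ₀` of loop classes: loops modulo the relation `d_Γ = 0`. -/
def LoopClass : Type := Quot loopRel

/-- The class of a loop in `Γ₀`. -/
def Loop.cls (γ : Loop) : LoopClass := Quot.mk loopRel γ

namespace LoopClass

/-- The image of a loop class (all representatives have the same image). -/
def image (c : LoopClass) : Set ℂ := ⋃ γ ∈ {γ : Loop | γ.cls = c}, Set.range γ.toFun

/-- The diameter of a loop class. -/
def diam (c : LoopClass) : ℝ := Metric.diam c.image

/-- A loop class is trivial if its image is a single point. -/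
def IsTrivial (c : LoopClass) : Prop := ∃ z : ℂ, c.image = {z}

/-- A loop class is simple if it has an injective representative. -/
def IsSimple (c : LoopClass) : Prop :=
  ∃ γ : Loop, γ.cls = c ∧ ∀ s t : ℝ, s ∈ Set.Ico (0:ℝ) 1 → t ∈ Set.Ico (0:ℝ) 1 →
    γ.toFun s = γ.toFun t → s = t

/-- The induced distance `d_Γ` on loop classes. -/
def dist (c c' : LoopClass) : ℝ :=
  sInf {r : ℝ | ∃ γ γ' : Loop, γ.cls = c ∧ γ'.cls = c' ∧ dGamma γ γ' ≤ r}

end LoopClass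

/-- The space `X(K)` of at most countable, locally finite collections of nontrivial loop
classes with images contained in `K`. -/
def LoopCollections (K : Set ℂ) : Set (Set LoopClass) :=
  {F | F.Countable ∧ (∀ c ∈ F, ¬ c.IsTrivial ∧ c.image ⊆ K) ∧
    ∀ ε : ℝ, 0 < ε → {c ∈ F | ε < c.diam}.Finite}

/-- A partial matching between the collections `F` and `G`: a set of pairs in which every
element of `F` and every element of `G` occurs at most once. -/
def IsMatching (F G : Set LoopClass) (π : Set (LoopClass × LoopClass)) : Prop :=
  (∀ p ∈ π, p.1 ∈ F ∧ p.2 ∈ G) ∧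
  (∀ p ∈ π, ∀ q ∈ π, p.1 = q.1 → p = q) ∧
  (∀ p ∈ π, ∀ q ∈ π, p.2 = q.2 → p = q)

/-- The elements of `F` and `G` not matched by `π`. -/
def unmatched (F G : Set LoopClass) (π : Set (LoopClass × LoopClass)) : Set LoopClass :=
  {c ∈ F | ∀ p ∈ π, p.1 ≠ c} ∪ {c ∈ G | ∀ p ∈ π, p.2 ≠ c}

/-- The distance `d_X` between loop collections: the infimum over partial matchings of the
maximum of the matched `d_Γ`-distances and of half the diameters of unmatched loops. -/
def dX (F G : Set LoopClass) : ℝ :=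
  sInf {r : ℝ | 0 ≤ r ∧ ∃ π : Set (LoopClass × LoopClass), IsMatching F G π ∧
    (∀ p ∈ π, LoopClass.dist p.1 p.2 ≤ r) ∧
    ∀ c ∈ unmatched F G π, c.diam / 2 ≤ r}

/-- The space `X(K)`, as a type. -/
def XSpace (K : Set ℂ) : Type := {F : Set LoopClass // F ∈ LoopCollections K}

namespace XSpace

/-- The metric `d_X` on `X(K)`. -/
def dist {K : Set ℂ} (F G : XSpace K) : ℝ := dX F.1 G.1

/-- `d_X`-open subsets of `X(K)`. -/
def IsOpen {K : Set ℂ} (U : Set (XSpace K)) : Prop :=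
  ∀ F ∈ U, ∃ ε : ℝ, 0 < ε ∧ ∀ G : XSpace K, XSpace.dist F G < ε → G ∈ U

/-- The Borel σ-algebra of the metric space `(X(K), d_X)`. -/
instance measurableSpace {K : Set ℂ} : MeasurableSpace (XSpace K) :=
  MeasurableSpace.generateFrom {U | XSpace.IsOpen U}

/-- Bounded `d_X`-continuous real test functions on `X(K)`. -/
def IsBddContinuous {K : Set ℂ} (f : XSpace K → ℝ) : Prop :=
  (∃ M : ℝ, ∀ F, |f F| ≤ M) ∧
  ∀ F : XSpace K, ∀ ε : ℝ, 0 < ε → ∃ ρ : ℝ, 0 < ρ ∧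
    ∀ G : XSpace K, XSpace.dist F G < ρ → |f G - f F| < ε

end XSpace

/-- Weak convergence, as `δ → 0⁺`, of a `δ`-indexed family of Borel measures on
`(X(K), d_X)`: integrals of bounded `d_X`-continuous functions converge. -/
def WeakLimit {K : Set ℂ} (L : ℝ → Measure (XSpace K)) (μ : Measure (XSpace K)) : Prop :=
  ∀ f : XSpace K → ℝ, XSpace.IsBddContinuous f →
    Tendsto (fun δ : ℝ => ∫ F, f F ∂(L δ)) (nhdsWithin 0 (Set.Ioi 0))
      (nhds (∫ F, f F ∂μ))

/-- The Dirac mass at a loop collection (zero if the collection is not an element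
of `X(K)`). -/
def diracAt (K : Set ℂ) (S : Set LoopClass) : Measure (XSpace K) :=
  if h : S ∈ LoopCollections K then Measure.dirac (⟨S, h⟩ : XSpace K) else 0

/-! ### Circle maps and closeness of loops -/

/-- Continuous degree-one maps are surjective. -/
theorem surj_of_deg_one {h : ℝ → ℝ} (hc : Continuous h) (h1 : ∀ t, h (t + 1) = h t + 1) :
    Function.Surjective h := by
  have hn : ∀ n : ℕ, h n = h 0 + n := by
    intro n
    induction n with
    | zero => simp
    | succ k ih => push_cast; rw [h1, ih]; ring
  have hm : ∀ n : ℕ, h (-n) = h 0 - n := by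
    intro n
    induction n with
    | zero => simp
    | succ k ih =>
      have := h1 (-((k + 1 : ℕ) : ℝ))
      have e : -((k + 1 : ℕ) : ℝ) + 1 = -(k : ℝ) := by push_cast; ring
      rw [e, ih] at this
      push_cast at this ⊢
      linarith
  intro y
  obtain ⟨n, hn'⟩ := exists_nat_ge (|y - h 0|)
  have := intermediate_value_Icc (a := -(n : ℝ)) (b := n)
    (by have : (0:ℝ) ≤ n := Nat.cast_nonneg n
        linarith) hc.continuousOn
  obtain ⟨x, -, hx⟩ := this (show y ∈ Icc (h (-(n:ℝ))) (h n) by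
    rw [hn, hm]
    have := abs_le.1 hn'
    constructor <;> linarith)
  exact ⟨x, hx⟩

theorem circleMaps_inv {φ : ℝ → ℝ} (hφ : φ ∈ CircleMaps) :
    ∃ ψ ∈ CircleMaps, (∀ t, φ (ψ t) = t) ∧ ∀ t, ψ (φ t) = t := by
  obtain ⟨hc, hm, h1⟩ := hφ
  let e := hm.orderIsoOfSurjective φ (surj_of_deg_one hc h1)
  have e1 : ∀ t, φ (e.symm t) = t := fun t => e.apply_symm_apply t
  have e2 : ∀ t, e.symm (φ t) = t := fun t => e.symm_apply_apply t
  refine ⟨e.symm, ⟨e.symm.continuous, e.symm.strictMono, fun t => ?_⟩, e1, e2⟩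
  apply hm.injective
  rw [e1, h1, e1]

theorem circleMaps_comp {φ ψ : ℝ → ℝ} (hφ : φ ∈ CircleMaps) (hψ : ψ ∈ CircleMaps) :
    (fun t => φ (ψ t)) ∈ CircleMaps :=
  ⟨hφ.1.comp hψ.1, hφ.2.1.comp hψ.2.1, fun t => by
    show φ (ψ (t + 1)) = φ (ψ t) + 1
    rw [hψ.2.2, hφ.2.2]⟩

theorem circleMaps_id : (fun t : ℝ => t) ∈ CircleMaps :=
  ⟨continuous_id, strictMono_id, fun _ => rfl⟩

/-- Two loops are `r`-close up to a reparametrization of the second one. -/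
def LClose (r : ℝ) (γ γ' : Loop) : Prop :=
  ∃ φ ∈ CircleMaps, ∀ t, dist (γ.toFun t) (γ'.toFun (φ t)) ≤ r

theorem LClose.symm {r : ℝ} {γ γ' : Loop} (h : LClose r γ γ') : LClose r γ' γ := by
  obtain ⟨φ, hφ, h⟩ := h
  obtain ⟨ψ, hψ, h1, h2⟩ := circleMaps_inv hφ
  refine ⟨ψ, hψ, fun t => ?_⟩
  have := h (ψ t)
  rwa [h1, dist_comm] at this

theorem LClose.trans {r r' : ℝ} {γ γ' γ'' : Loop} (h : LClose r γ γ') (h' : LClose r' γ' γ'') :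
    LClose (r + r') γ γ'' := by
  obtain ⟨φ, hφ, h⟩ := h
  obtain ⟨ψ, hψ, h'⟩ := h'
  exact ⟨_, circleMaps_comp hψ hφ, fun t =>
    (dist_triangle _ _ _).trans (add_le_add (h t) (h' (φ t)))⟩

theorem Loop.isCompact_range (γ : Loop) : IsCompact (range γ.toFun) := by
  have : range γ.toFun = γ.toFun '' Icc 0 1 := by
    have := γ.periodic_toFun.image_Icc one_pos 0
    rw [zero_add] at this
    exact this.symm
  rw [this]
  exact isCompact_Icc.image γ.continuous_toFun

theorem dGamma_nonneg (γ γ' : Loop) : 0 ≤ dGamma γ γ' :=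
  Real.sInf_nonneg fun _ hr => hr.1

theorem dGamma_le {r : ℝ} {γ γ' : Loop} (hr : 0 ≤ r) (h : LClose r γ γ') : dGamma γ γ' ≤ r := by
  obtain ⟨φ, hφ, h⟩ := h
  exact csInf_le ⟨0, fun _ hr => hr.1⟩ ⟨hr, _, circleMaps_id, φ, hφ, h⟩

theorem lclose_of_dGamma_lt {r : ℝ} {γ γ' : Loop} (h : dGamma γ γ' < r) : LClose r γ γ' := by
  have hne : {r : ℝ | 0 ≤ r ∧ ∃ φ ∈ CircleMaps, ∃ ψ ∈ CircleMaps,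
      ∀ t : ℝ, dist (γ.toFun (φ t)) (γ'.toFun (ψ t)) ≤ r}.Nonempty := by
    have hb := (γ.isCompact_range.isBounded.union γ'.isCompact_range.isBounded)
    refine ⟨_, Metric.diam_nonneg, _, circleMaps_id, _, circleMaps_id, fun t =>
      Metric.dist_le_diam_of_mem hb (Or.inl ⟨t, rfl⟩) (Or.inr ⟨t, rfl⟩)⟩
  obtain ⟨r', ⟨-, φ, hφ, ψ, hψ, h'⟩, hr'⟩ := exists_lt_of_csInf_lt hne h
  obtain ⟨χ, hχ, h1, h2⟩ := circleMaps_inv hφ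
  refine ⟨_, circleMaps_comp hψ hχ, fun t => ?_⟩
  have := h' (χ t)
  rw [h1] at this
  exact this.trans hr'.le

theorem loopRel_iff {γ γ' : Loop} : loopRel γ γ' ↔ ∀ r > 0, LClose r γ γ' := by
  constructor
  · intro h r hr
    exact lclose_of_dGamma_lt (h.trans_lt hr)
  · intro h
    refine le_antisymm (le_of_forall_pos_le_add fun r hr => ?_) (dGamma_nonneg _ _)
    rw [zero_add]
    exact dGamma_le hr.le (h r hr)

theorem loopRel_equivalence : Equivalence loopRel where
  refl γ := loopRel_iff.2 fun r hr => ⟨_, circleMaps_id, fun t => by simpa using hr.le⟩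
  symm h := loopRel_iff.2 fun r hr => (loopRel_iff.1 h r hr).symm
  trans h h' := loopRel_iff.2 fun r hr => by
    have := (loopRel_iff.1 h (r / 2) (half_pos hr)).trans (loopRel_iff.1 h' (r / 2) (half_pos hr))
    rwa [add_halves] at this

theorem cls_eq_iff {γ γ' : Loop} : γ.cls = γ'.cls ↔ ∀ r > 0, LClose r γ γ' := by
  rw [← loopRel_iff]
  exact loopRel_equivalence.quot_mk_eq_iff γ γ'

theorem exists_rep (c : LoopClass) : ∃ γ : Loop, γ.cls = c := Quot.exists_rep c

theorem image_cls (γ : Loop) : γ.cls.image = range γ.toFun := by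
  apply Subset.antisymm
  · refine iUnion₂_subset fun γ' hγ' => ?_
    rintro _ ⟨t, rfl⟩
    rw [← γ.isCompact_range.isClosed.closure_eq, Metric.mem_closure_iff]
    intro ε hε
    obtain ⟨φ, -, h⟩ := cls_eq_iff.1 hγ' (ε / 2) (half_pos hε)
    exact ⟨_, ⟨φ t, rfl⟩, (h t).trans_lt (half_lt_self hε)⟩
  · intro z hz
    exact mem_iUnion₂.2 ⟨γ, rfl, hz⟩

theorem lclose_of_dist_lt {γ γ' : Loop} {r : ℝ} (h : LoopClass.dist γ.cls γ'.cls < r) :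
    LClose r γ γ' := by
  have hne : {r : ℝ | ∃ γ₁ γ₂ : Loop, γ₁.cls = γ.cls ∧ γ₂.cls = γ'.cls ∧
      dGamma γ₁ γ₂ ≤ r}.Nonempty := ⟨_, γ, γ', rfl, rfl, le_rfl⟩
  obtain ⟨r', ⟨γ₁, γ₂, h1, h2, h3⟩, hr'⟩ := exists_lt_of_csInf_lt hne h
  have h4 : LClose ((r + r') / 2) γ₁ γ₂ := lclose_of_dGamma_lt (by linarith)
  have h5 := cls_eq_iff.1 h1.symm ((r - r') / 4) (by linarith)
  have h6 := cls_eq_iff.1 h2 ((r - r') / 4) (by linarith)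
  have := (h5.trans h4).trans h6
  have e : (r - r') / 4 + (r + r') / 2 + (r - r') / 4 = r := by ring
  rwa [e] at this

/-! ### Bad loops -/

/-- A loop with a double point separating it into two arcs of diameter at least `ε`. -/
def Bad (ε : ℝ) (γ : Loop) : Prop :=
  ∃ s u v t x y : ℝ, s ≤ u ∧ u ≤ v ∧ v ≤ t ∧ t ≤ x ∧ x ≤ y ∧ y ≤ s + 1 ∧
    γ.toFun s = γ.toFun t ∧ ε ≤ dist (γ.toFun u) (γ.toFun v) ∧ ε ≤ dist (γ.toFun x) (γ.toFun y)

theorem not_bad_open {ε : ℝ} {γ : Loop} (h : ¬ Bad ε γ) :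
    ∃ r > 0, ∀ γ', LClose r γ γ' → ¬ Bad ε γ' := by
  let C : Set (Fin 6 → ℝ) := Icc 0 2 ∩ {p | p 0 ≤ p 1 ∧ p 1 ≤ p 2 ∧ p 2 ≤ p 3 ∧ p 3 ≤ p 4 ∧
    p 4 ≤ p 5 ∧ p 5 ≤ p 0 + 1}
  have hC : IsCompact C := by
    apply isCompact_Icc.inter_right
    refine IsClosed.and ?_ <| IsClosed.and ?_ <| IsClosed.and ?_ <| IsClosed.and ?_ <|
      IsClosed.and ?_ ?_ <;>
    exact isClosed_le (by fun_prop) (by fun_prop)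
  let f : (Fin 6 → ℝ) → ℝ := fun p => max (dist (γ.toFun (p 0)) (γ.toFun (p 3)))
    (max (ε - dist (γ.toFun (p 1)) (γ.toFun (p 2))) (ε - dist (γ.toFun (p 4)) (γ.toFun (p 5))))
  have hf : Continuous f := by
    have := γ.continuous_toFun
    fun_prop
  have hne : C.Nonempty := ⟨0, by simp, by simp⟩
  obtain ⟨p, hp, hmin⟩ := hC.exists_isMinOn hne hf.continuousOn
  have hpos : 0 < f p := by
    by_contra hcon
    have hcon : f p ≤ 0 := not_lt.1 hcon
    simp only [f, max_le_iff, sub_nonpos] at hcon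
    obtain ⟨h1, h2, h3, h4, h5, h6⟩ := hp.2
    exact h ⟨p 0, p 1, p 2, p 3, p 4, p 5, h1, h2, h3, h4, h5, h6,
      dist_le_zero.1 hcon.1, hcon.2.1, hcon.2.2⟩
  refine ⟨f p / 3, by positivity, ?_⟩
  rintro γ' hcl ⟨s, u, v, t, x, y, h1, h2, h3, h4, h5, h6, h7, h8, h9⟩
  obtain ⟨φ, hφ, hcl⟩ := hcl.symm
  have hm := hφ.2.1.monotone
  let k : ℤ := ⌊φ s⌋
  have hk : ∀ a, γ.toFun (φ a - k) = γ.toFun (φ a) := fun a => by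
    simpa using γ.periodic_toFun.sub_int_mul_eq k (x := φ a)
  have a0 : 0 ≤ φ s - k := by have := Int.floor_le (φ s); simp only [k]; linarith
  have a1 : φ s - k < 1 := by have := Int.lt_floor_add_one (φ s); simp only [k]; linarith
  have h6' := hm h6
  rw [hφ.2.2] at h6'
  have b1 := hm h1
  have b2 := hm h2
  have b3 := hm h3
  have b4 := hm h4
  have b5 := hm h5
  let q : Fin 6 → ℝ := ![φ s - k, φ u - k, φ v - k, φ t - k, φ x - k, φ y - k]
  have hq : q ∈ C := by
    refine ⟨⟨fun i => ?_, fun i => ?_⟩, ?_⟩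
    · fin_cases i <;> simp [q] <;> linarith
    · fin_cases i <;> simp [q] <;> linarith
    · simp [q]
      refine ⟨?_, ?_, ?_, ?_, ?_, ?_⟩ <;> linarith
  have hle : f p ≤ f q := hmin hq
  have hlt : f q ≤ 2 * (f p / 3) := by
    simp only [f, q, max_le_iff]
    simp only [Matrix.cons_val, hk]
    have d1 := hcl s
    have d2 := hcl u
    have d3 := hcl v
    have d4 := hcl t
    have d5 := hcl x
    have d6 := hcl y
    have tr : ∀ a b, dist (γ'.toFun a) (γ'.toFun b) ≤ dist (γ'.toFun a) (γ.toFun (φ a)) +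
      dist (γ.toFun (φ a)) (γ.toFun (φ b)) + dist (γ'.toFun b) (γ.toFun (φ b)) := fun a b => by
        rw [dist_comm (γ'.toFun b)]; exact dist_triangle4 _ _ _ _
    have t1 := tr u v
    have t2 := tr x y
    have t3 := dist_triangle (γ.toFun (φ s)) (γ'.toFun s) (γ.toFun (φ t))
    rw [dist_comm (γ.toFun (φ s)) (γ'.toFun s), h7] at t3
    rw [h7] at d1
    simp only [f] at d1 d2 d3 d4 d5 d6
    refine ⟨?_, ?_, ?_⟩ <;> linarith
  linarith

theorem bad_congr {ε : ℝ} {γ γ' : Loop} (h : γ.cls = γ'.cls) (hb : Bad ε γ') : Bad ε γ := by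
  by_contra hcon
  obtain ⟨r, hr, h'⟩ := not_bad_open hcon
  exact h' γ' (cls_eq_iff.1 h r hr) hb

/-- Badness of loop classes. -/
def CBad (ε : ℝ) (c : LoopClass) : Prop := ∃ γ : Loop, γ.cls = c ∧ Bad ε γ

theorem not_cbad_of_simple {ε : ℝ} (hε : 0 < ε) {c : LoopClass} (hc : c.IsSimple) :
    ¬ CBad ε c := by
  rintro ⟨γ', h', hb⟩
  obtain ⟨γ, h, hinj⟩ := hc
  obtain ⟨s, u, v, t, x, y, h1, h2, h3, h4, h5, h6, h7, h8, h9⟩ := bad_congr (h.trans h'.symm) hb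
  have hfr : ∀ a, γ.toFun (Int.fract a) = γ.toFun a := fun a => by
    simpa using γ.periodic_toFun.sub_int_mul_eq ⌊a⌋ (x := a)
  have hst := hinj (Int.fract s) (Int.fract t) ⟨Int.fract_nonneg _, Int.fract_lt_one _⟩
    ⟨Int.fract_nonneg _, Int.fract_lt_one _⟩ (by rw [hfr, hfr, h7])
  obtain ⟨k, hk⟩ := Int.fract_eq_fract.1 hst
  have k0 : k ≤ 0 := by
    have : (k : ℝ) ≤ 0 := by linarith
    exact_mod_cast this
  have k1 : -1 ≤ k := by
    have : (-1 : ℝ) ≤ k := by linarith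
    exact_mod_cast this
  have huv : u ≠ v := by rintro rfl; rw [dist_self] at h8; linarith
  have hxy : x ≠ y := by rintro rfl; rw [dist_self] at h9; linarith
  obtain rfl | rfl : k = 0 ∨ k = -1 := by omega
  · apply huv
    push_cast at hk
    linarith
  · apply hxy
    push_cast at hk
    linarith

/-! ### Monotone reparametrization -/

/-- Running maximal distance from the point `γ q`. -/
def runMax (γ : Loop) (q t : ℝ) : ℝ :=
  sSup ((fun u => dist (γ.toFun u) (γ.toFun q)) '' Icc q (max q t))

theorem runMax_continuous (γ : Loop) (q : ℝ) : Continuous (runMax γ q) := by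
  have h : runMax γ q = fun t => sSup ((fun v : ℝ =>
      dist (γ.toFun (q + v • (max q t - q))) (γ.toFun q)) '' Icc 0 1) := by
    funext t
    have e : Icc q (max q t) = (fun v : ℝ => q + v • (max q t - q)) '' Icc 0 1 := by
      rw [← segment_eq_image', segment_eq_Icc (le_max_left _ _)]
    unfold runMax
    rw [e, image_image]
  rw [h]
  apply isCompact_Icc.continuous_sSup
    (f := fun t v : ℝ => dist (γ.toFun (q + v • (max q t - q))) (γ.toFun q))
  have := γ.continuous_toFun
  show Continuous fun p : ℝ × ℝ =>
    dist (γ.toFun (q + p.2 • (max q p.1 - q))) (γ.toFun q)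
  fun_prop

theorem dist_le_D (γ : Loop) (a b : ℝ) :
    dist (γ.toFun a) (γ.toFun b) ≤ Metric.diam (range γ.toFun) :=
  Metric.dist_le_diam_of_mem γ.isCompact_range.isBounded ⟨a, rfl⟩ ⟨b, rfl⟩

theorem le_runMax {γ : Loop} {q t u : ℝ} (h1 : q ≤ u) (h2 : u ≤ max q t) :
    dist (γ.toFun u) (γ.toFun q) ≤ runMax γ q t := by
  apply le_csSup
  · refine ⟨Metric.diam (range γ.toFun), ?_⟩
    rintro _ ⟨u, -, rfl⟩
    exact dist_le_D _ _ _
  · exact ⟨u, ⟨h1, h2⟩, rfl⟩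

theorem runMax_le {γ : Loop} {q t r : ℝ}
    (h : ∀ u, q ≤ u → u ≤ max q t → dist (γ.toFun u) (γ.toFun q) ≤ r) : runMax γ q t ≤ r := by
  apply csSup_le
  · exact ⟨_, q, ⟨le_rfl, le_max_left _ _⟩, rfl⟩
  · rintro _ ⟨u, hu, rfl⟩
    exact h u hu.1 hu.2

theorem runMax_nonneg (γ : Loop) (q t : ℝ) : 0 ≤ runMax γ q t :=
  dist_nonneg.trans (le_runMax (u := q) le_rfl (le_max_left _ _))

theorem runMax_le_D (γ : Loop) (q t : ℝ) : runMax γ q t ≤ Metric.diam (range γ.toFun) :=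
  runMax_le fun _ _ _ => dist_le_D _ _ _

theorem runMax_mono (γ : Loop) (q : ℝ) : Monotone (runMax γ q) := fun _ _ hst =>
  runMax_le fun _ h1 h2 => le_runMax h1 (h2.trans (max_le_max le_rfl hst))

theorem runMax_const {γ : Loop} {q s t : ℝ} (hst : s ≤ t)
    (h : ∀ u ∈ Icc s t, γ.toFun u = γ.toFun s) : runMax γ q s = runMax γ q t := by
  refine le_antisymm (runMax_mono γ q hst) (runMax_le fun u h1 h2 => ?_)
  rcases le_or_gt u (max q s) with hu | hu
  · exact le_runMax h1 hu
  · have hq := (le_max_left q s).trans_lt hu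
    have hs := (le_max_right q s).trans_lt hu
    have ht : u ≤ t := (le_max_iff.1 h2).resolve_left (not_le.2 hq)
    rw [h u ⟨hs.le, ht⟩, ← h (max q s) ⟨le_max_right _ _, hu.le.trans ht⟩]
    exact le_runMax (le_max_left _ _) le_rfl

theorem exists_h0 (γ : Loop) : ∃ h : ℝ → ℝ, Continuous h ∧ Monotone h ∧
    (∀ s t, s ≤ t → h s = h t → γ.toFun s = γ.toFun t) ∧
    (∀ s t, s ≤ t → (∀ u ∈ Icc s t, γ.toFun u = γ.toFun s) → h s = h t) := by
  let q := TopologicalSpace.denseSeq ℝ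
  let f : ℕ → ℝ → ℝ := fun n t => (1 / 2) ^ n * runMax γ (q n) t
  let b : ℕ → ℝ := fun n => (1 / 2) ^ n * Metric.diam (range γ.toFun)
  have hb : Summable b := summable_geometric_two.mul_right _
  have hf0 : ∀ n t, 0 ≤ f n t := fun n t => mul_nonneg (by positivity) (runMax_nonneg _ _ _)
  have hfb : ∀ n t, f n t ≤ b n := fun n t =>
    mul_le_mul_of_nonneg_left (runMax_le_D _ _ _) (by positivity)
  have hs : ∀ t, Summable fun n => f n t := fun t =>
    Summable.of_nonneg_of_le (fun n => hf0 n t) (fun n => hfb n t) hb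
  have hm : ∀ n, Monotone (f n) := fun n s t hst =>
    mul_le_mul_of_nonneg_left (runMax_mono _ _ hst) (by positivity)
  refine ⟨fun t => ∑' n, f n t, ?_, ?_, ?_, ?_⟩
  · refine continuous_tsum (fun n => continuous_const.mul (runMax_continuous _ _)) hb fun n t => ?_
    rw [Real.norm_of_nonneg (hf0 n t)]
    exact hfb n t
  · exact fun s t hst => Summable.tsum_le_tsum (fun n => hm n hst) (hs s) (hs t)
  · intro s t hst heq
    by_contra hne
    have hlt : s < t := lt_of_le_of_ne hst (by rintro rfl; exact hne rfl)
    have hop : _root_.IsOpen (Ioo s t ∩ {u | γ.toFun u ≠ γ.toFun t}) :=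
      isOpen_Ioo.inter (isOpen_ne_fun γ.continuous_toFun continuous_const)
    have hnon : (Ioo s t ∩ {u | γ.toFun u ≠ γ.toFun t}).Nonempty := by
      have h1 : ∀ᶠ u in nhdsWithin s (Ioi s), γ.toFun u ≠ γ.toFun t :=
        (γ.continuous_toFun.continuousAt.eventually_ne hne).filter_mono nhdsWithin_le_nhds
      have h2 : ∀ᶠ u in nhdsWithin s (Ioi s), u ∈ Ioo s t := Ioo_mem_nhdsGT hlt
      obtain ⟨u, hu⟩ := (h2.and h1).exists
      exact ⟨u, hu⟩
    obtain ⟨n, hn1, hn2⟩ := (TopologicalSpace.denseRange_denseSeq ℝ).exists_mem_open hop hnon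
    have hn1 : q n ∈ Ioo s t := hn1
    have h0 : runMax γ (q n) s ≤ 0 := runMax_le fun u h1 h2 => by
      rw [max_eq_left hn1.1.le] at h2
      rw [le_antisymm h2 h1, dist_self]
    have h1 : 0 < runMax γ (q n) t :=
      (dist_pos.2 (Ne.symm hn2)).trans_le (le_runMax hn1.2.le (le_max_right _ _))
    have : ∑' n, f n s < ∑' n, f n t := by
      refine Summable.tsum_lt_tsum (fun n => hm n hst) (i := n) ?_ (hs s) (hs t)
      exact mul_lt_mul_of_pos_left (h0.trans_lt h1) (by positivity)
    exact this.ne heq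
  · intro s t hst h
    refine tsum_congr fun n => ?_
    show (1 / 2) ^ n * _ = (1 / 2) ^ n * _
    rw [runMax_const hst h]

theorem Loop.fract (γ : Loop) (a : ℝ) : γ.toFun (Int.fract a) = γ.toFun a := by
  simpa using γ.periodic_toFun.sub_int_mul_eq ⌊a⌋ (x := a)

theorem exists_h (γ : Loop) (hγ : ∃ a b, γ.toFun a ≠ γ.toFun b) :
    ∃ h : ℝ → ℝ, Continuous h ∧ Monotone h ∧ (∀ t, h (t + 1) = h t + 1) ∧
    (∀ s t, h s = h t → γ.toFun s = γ.toFun t) ∧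
    (∀ s t, s ≤ t → t ≤ s + 1 → (∀ u ∈ Icc s t, γ.toFun u = γ.toFun s) → h s = h t) := by
  obtain ⟨g, gc, gm, g1, g2⟩ := exists_h0 γ
  have hpos : 0 < g 1 - g 0 := by
    by_contra hcon
    have e : g 0 = g 1 := le_antisymm (gm zero_le_one) (by linarith)
    obtain ⟨a, b, hab⟩ := hγ
    have key : ∀ a, γ.toFun a = γ.toFun 0 := fun a => by
      rw [← γ.fract a]
      refine (g1 _ _ (Int.fract_nonneg a) ?_).symm
      exact le_antisymm (gm (Int.fract_nonneg a)) ((gm (Int.fract_lt_one a).le).trans e.ge)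
    exact hab ((key a).trans (key b).symm)
  let H : ℝ → ℝ := fun t => (g t - g 0) / (g 1 - g 0)
  have Hc : Continuous H := (gc.sub continuous_const).div_const _
  have Hm : Monotone H := fun s t hst =>
    div_le_div_of_nonneg_right (sub_le_sub_right (gm hst) _) hpos.le
  have Hi : ∀ {s t}, H s = H t → g s = g t := fun {s t} h => by
    have := (div_left_inj' hpos.ne').1 h
    linarith
  have H0 : H 0 = 0 := by simp [H]
  have H1 : H 1 = 1 := div_self hpos.ne'
  have Hf0 : ∀ t, 0 ≤ H (Int.fract t) := fun t => H0 ▸ Hm (Int.fract_nonneg t)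
  have Hf1 : ∀ t, H (Int.fract t) ≤ 1 := fun t => H1 ▸ Hm (Int.fract_lt_one t).le
  let h : ℝ → ℝ := fun t => ⌊t⌋ + H (Int.fract t)
  have hm : Monotone h := by
    intro s t hst
    show (⌊s⌋ : ℝ) + _ ≤ ⌊t⌋ + _
    rcases (Int.floor_mono hst).eq_or_lt with e | e
    · rw [e]
      have : Int.fract s ≤ Int.fract t := by unfold Int.fract; rw [e]; linarith
      have := Hm this
      linarith
    · have e' : (⌊s⌋ : ℝ) + 1 ≤ ⌊t⌋ := by exact_mod_cast e
      linarith [Hf0 t, Hf1 s]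
  have γ01 : γ.toFun 1 = γ.toFun 0 := by simpa using γ.periodic_toFun 0
  have gle : ∀ {s t}, s ≤ t → H s = H t → γ.toFun s = γ.toFun t := fun hst e => g1 _ _ hst (Hi e)
  have key : ∀ s t, s ≤ t → h s = h t → γ.toFun s = γ.toFun t := by
    intro s t hst heq
    have heq : (⌊s⌋ : ℝ) + H (Int.fract s) = ⌊t⌋ + H (Int.fract t) := heq
    rw [← γ.fract s, ← γ.fract t]
    rcases (Int.floor_mono hst).eq_or_lt with e | e
    · have : Int.fract s ≤ Int.fract t := by unfold Int.fract; rw [e]; linarith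
      rw [e] at heq
      exact gle this (by linarith)
    · have e' : (⌊s⌋ : ℝ) + 1 ≤ ⌊t⌋ := by exact_mod_cast e
      have a := Hf0 t
      have b := Hf1 s
      rw [gle (Int.fract_lt_one s).le (by rw [H1]; linarith), γ01]
      exact gle (Int.fract_nonneg t) (by rw [H0]; linarith)
  refine ⟨h, ?_, hm, ?_, ?_, ?_⟩
  · have : h = fun t => t + ((fun x => H x - x) ∘ Int.fract) t := by
      funext t
      have := Int.floor_add_fract t
      simp only [h, Function.comp]
      linarith
    rw [this]
    refine continuous_id.add (ContinuousOn.comp_fract'' (Hc.sub continuous_id).continuousOn ?_)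
    simp [H0, H1]
  · intro t
    simp only [h, Int.floor_add_one, Int.fract_add_one]
    push_cast
    ring
  · intro s t heq
    rcases le_total s t with hst | hst
    · exact key s t hst heq
    · exact (key t s hst heq.symm).symm
  · intro s t hst hst1 hcon
    have Hg : ∀ {s t}, g s = g t → H s = H t := fun {s t} e => by simp only [H, e]
    show (⌊s⌋ : ℝ) + _ = ⌊t⌋ + _
    have shift : ∀ (k : ℤ) a, γ.toFun (a + k) = γ.toFun a := fun k a => by
      simpa using γ.periodic_toFun.int_mul k a
    have fs := Int.floor_add_fract s
    have ft := Int.floor_add_fract t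
    rcases (Int.floor_mono hst).eq_or_lt with e | e
    · rw [e] at fs ⊢
      congr 1
      refine Hg (g2 _ _ (by linarith) fun u hu => ?_)
      rw [γ.fract s, ← shift ⌊t⌋ u]
      exact hcon _ ⟨by linarith [hu.1], by linarith [hu.2]⟩
    · have e2 : ⌊t⌋ ≤ ⌊s⌋ + 1 := by
        rw [← Int.floor_add_one]; exact Int.floor_mono hst1
      have e3 : (⌊t⌋ : ℝ) = ⌊s⌋ + 1 := by
        have : ⌊t⌋ = ⌊s⌋ + 1 := by omega
        rw [this]; push_cast; ring
      have a0 := Int.fract_nonneg t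
      have a1 := (Int.fract_lt_one s).le
      have i1 : H (Int.fract s) = 1 := by
        rw [← H1]
        refine Hg (g2 _ _ a1 fun u hu => ?_)
        rw [γ.fract s, ← shift ⌊s⌋ u]
        exact hcon _ ⟨by linarith [hu.1], by linarith [hu.2]⟩
      have i2 : H (Int.fract t) = 0 := by
        rw [← H0]
        refine (Hg (g2 _ _ a0 fun u hu => ?_)).symm
        rw [← shift ⌊t⌋ u, ← shift ⌊t⌋ 0]
        rw [hcon (u + ⌊t⌋) ⟨by linarith [hu.1], by linarith [hu.2]⟩,
          hcon (0 + ⌊t⌋) ⟨by linarith, by linarith⟩]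
      rw [i1, i2, e3]
      ring

theorem Loop.uniformContinuous (γ : Loop) : UniformContinuous γ.toFun := by
  have : Fact ((0 : ℝ) < 1) := ⟨one_pos⟩
  have hc : Continuous (γ.periodic_toFun.lift : AddCircle (1 : ℝ) → ℂ) := by
    refine (QuotientAddGroup.isQuotientMap_mk _).continuous_iff.2 ?_
    exact γ.continuous_toFun
  have h1 := CompactSpace.uniformContinuous_of_continuous hc
  have h2 : UniformContinuous (QuotientAddGroup.mk' (AddSubgroup.zmultiples (1 : ℝ))) :=
    uniformContinuous_addMonoidHom_of_continuous continuous_quot_mk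
  exact h1.comp h2

/-- A nonconstant loop all of whose double points bound constant arcs is equivalent to an
injective loop. -/
theorem simple_of_weak (γ : Loop) (hγ : ∃ a b, γ.toFun a ≠ γ.toFun b)
    (hw : ∀ s t, s ≤ t → t ≤ s + 1 → γ.toFun s = γ.toFun t →
      (∀ u ∈ Icc s t, γ.toFun u = γ.toFun s) ∨ (∀ u ∈ Icc t (s + 1), γ.toFun u = γ.toFun t)) :
    γ.cls.IsSimple := by
  obtain ⟨h, hc, hm, h1, hi, hcon⟩ := exists_h γ hγ
  have hsurj := surj_of_deg_one hc h1
  let k := Function.surjInv hsurj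
  have hk : ∀ x, h (k x) = x := Function.surjInv_eq hsurj
  have hkh : ∀ t, γ.toFun (k (h t)) = γ.toFun t := fun t => hi _ _ (hk _)
  have hproper : IsProperMap h := by
    rw [isProperMap_iff_tendsto_cocompact]
    refine ⟨hc, ?_⟩
    rw [cocompact_eq_atBot_atTop]
    refine Tendsto.sup_sup ?_ ?_
    · exact hm.tendsto_atBot_atBot fun b => ⟨k b, (hk b).le⟩
    · exact hm.tendsto_atTop_atTop fun b => ⟨k b, (hk b).ge⟩
  have hquot : Topology.IsQuotientMap h := hproper.isClosedMap.isQuotientMap hc hsurj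
  let γ' : Loop :=
    { toFun := fun x => γ.toFun (k x)
      continuous_toFun := by
        rw [hquot.continuous_iff]
        have : (fun x => γ.toFun (k x)) ∘ h = γ.toFun := funext hkh
        rw [this]
        exact γ.continuous_toFun
      periodic_toFun := fun x => by
        show γ.toFun (k (x + 1)) = γ.toFun (k x)
        rw [hi (k (x + 1)) (k x + 1) (by rw [h1, hk, hk])]
        exact γ.periodic_toFun _ }
  have hγ' : ∀ t, γ'.toFun (h t) = γ.toFun t := hkh
  refine ⟨γ', ?_, ?_⟩
  · symm
    rw [cls_eq_iff]
    intro r hr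
    have huc : UniformContinuous γ'.toFun := γ'.uniformContinuous
    obtain ⟨δ, hδ, hd⟩ := Metric.uniformContinuous_iff.1 huc r hr
    obtain ⟨D, hD⟩ : ∃ D, ∀ t, |t - h t| ≤ D := by
      have hp : Function.Periodic (fun t => t - h t) 1 := fun t => by
        show t + 1 - h (t + 1) = t - h t
        rw [h1]
        ring
      obtain ⟨D, hD⟩ := isBounded_iff_forall_norm_le.1
        (hp.isBounded_of_continuous one_ne_zero (continuous_id.sub hc))
      exact ⟨D, fun t => hD _ ⟨t, rfl⟩⟩
    have hD0 : 0 ≤ D := (abs_nonneg _).trans (hD 0)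
    let η := min (1 / 2) (δ / (2 * (D + 1)))
    have η0 : 0 < η := by positivity
    have η1 : η < 1 := (min_le_left _ _).trans_lt (by norm_num)
    refine ⟨fun t => (1 - η) * h t + η * t, ⟨by fun_prop, ?_, ?_⟩, fun t => ?_⟩
    · intro s t hst
      have a := mul_le_mul_of_nonneg_left (hm hst.le) (sub_pos.2 η1).le
      have b := mul_lt_mul_of_pos_left hst η0
      show (1 - η) * h s + η * s < (1 - η) * h t + η * t
      linarith
    · intro t
      show (1 - η) * h (t + 1) + η * (t + 1) = (1 - η) * h t + η * t + 1
      rw [h1]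
      ring
    · rw [← hγ' t]
      refine (hd ?_).le
      have e : h t - ((1 - η) * h t + η * t) = -(η * (t - h t)) := by ring
      rw [Real.dist_eq, e, abs_neg, abs_mul, abs_of_pos η0]
      have i1 : η * |t - h t| ≤ δ / (2 * (D + 1)) * (D + 1) :=
        mul_le_mul (min_le_right _ _) ((hD t).trans (by linarith)) (abs_nonneg _) (by positivity)
      have i2 : δ / (2 * (D + 1)) * (D + 1) = δ / 2 := by field_simp
      linarith
  · have key : ∀ x y : ℝ, x ∈ Ico (0:ℝ) 1 → y ∈ Ico (0:ℝ) 1 → x < y →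
        γ'.toFun x ≠ γ'.toFun y := by
      intro x y hx hy hxy heq
      have heq : γ.toFun (k x) = γ.toFun (k y) := heq
      have l1 : k x ≤ k y := by
        by_contra hlt
        have := hm (not_le.1 hlt).le
        rw [hk, hk] at this
        linarith
      have l2 : k y ≤ k x + 1 := by
        by_contra hlt
        have := hm (not_le.1 hlt).le
        rw [h1, hk, hk] at this
        linarith [hx.1, hy.2]
      rcases hw _ _ l1 l2 heq with hh | hh
      · have := hcon _ _ l1 l2 hh
        rw [hk, hk] at this
        linarith
      · have := hcon _ _ l2 (by linarith) hh
        rw [h1, hk, hk] at this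
        linarith [hx.1, hy.2]
    intro x y hx hy heq
    rcases lt_trichotomy x y with hlt | hlt | hlt
    · exact absurd heq (key x y hx hy hlt)
    · exact hlt
    · exact absurd heq.symm (key y x hy hx hlt)

theorem simple_of_not_cbad {c : LoopClass} (hc : ¬ c.IsTrivial)
    (h : ∀ n : ℕ, ¬ CBad (1 / ((n : ℝ) + 1)) c) : c.IsSimple := by
  obtain ⟨γ, rfl⟩ := exists_rep c
  apply simple_of_weak
  · by_contra hcon
    push Not at hcon
    apply hc
    refine ⟨γ.toFun 0, ?_⟩
    rw [image_cls]
    ext z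
    constructor
    · rintro ⟨t, rfl⟩
      exact hcon t 0
    · rintro rfl
      exact ⟨0, rfl⟩
  · intro s t hst hst1 heq
    by_contra hcon
    push Not at hcon
    obtain ⟨⟨u, hu, hus⟩, ⟨x, hx, hxt⟩⟩ := hcon
    obtain ⟨n, hn⟩ := exists_nat_one_div_lt
      (lt_min (dist_pos.2 hus.symm) (dist_pos.2 hxt.symm))
    refine h n ⟨γ, rfl, s, s, u, t, t, x, le_rfl, hu.1, hu.2, le_rfl, hx.1, hx.2, heq, ?_, ?_⟩
    · exact (hn.trans_le (min_le_left _ _)).le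
    · exact (hn.trans_le (min_le_right _ _)).le

theorem diam_cls (γ : Loop) : γ.cls.diam = Metric.diam (range γ.toFun) := by
  unfold LoopClass.diam
  rw [image_cls]

theorem exists_radius (S : Set LoopClass) (hS : S.Finite) (P : LoopClass → ℝ → Prop)
    (hP : ∀ c ∈ S, ∃ r > 0, P c r) (hmono : ∀ c r r', r' ≤ r → P c r → P c r') :
    ∃ r > 0, ∀ c ∈ S, P c r := by
  induction S, hS using Set.Finite.induction_on with
  | empty => exact ⟨1, one_pos, by simp⟩
  | insert _ _ ih =>
    obtain ⟨r, hr, h⟩ := ih fun c hc => hP c (mem_insert_of_mem _ hc)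
    obtain ⟨r', hr', h'⟩ := hP _ (mem_insert _ _)
    refine ⟨min r r', lt_min hr hr', ?_⟩
    rintro c (rfl | hc)
    · exact hmono _ _ _ (min_le_right _ _) h'
    · exact hmono _ _ _ (min_le_left _ _) (h c hc)

theorem isOpen_not_cbad {K : Set ℂ} (hK : IsCompact K) {ε : ℝ} (hε : 0 < ε) :
    XSpace.IsOpen {F : XSpace K | ∀ c ∈ F.1, ¬ CBad ε c} := by
  intro F hF
  obtain ⟨r, hr, hrS⟩ := exists_radius {c ∈ F.1 | ε / 2 < c.diam} (F.2.2.2 _ (half_pos hε))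
    (fun c r => ∀ c', LoopClass.dist c c' < r → ¬ CBad ε c')
    (by
      rintro c ⟨hc, -⟩
      obtain ⟨γ, rfl⟩ := exists_rep c
      obtain ⟨r, hr, h⟩ := not_bad_open (fun hb => hF _ hc ⟨γ, rfl, hb⟩ : ¬ Bad ε γ)
      refine ⟨r, hr, ?_⟩
      rintro _ hd ⟨γ', rfl, hb⟩
      exact h γ' (lclose_of_dist_lt hd) hb)
    (fun c r r' hr h c' hc' => h c' (hc'.trans_le hr))
  refine ⟨min r (ε / 8), lt_min hr (by positivity), ?_⟩
  rintro G hG c' hc' ⟨γ', rfl, hb⟩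
  have hne : {r : ℝ | 0 ≤ r ∧ ∃ π : Set (LoopClass × LoopClass), IsMatching F.1 G.1 π ∧
      (∀ p ∈ π, LoopClass.dist p.1 p.2 ≤ r) ∧
      ∀ c ∈ unmatched F.1 G.1 π, c.diam / 2 ≤ r}.Nonempty := by
    refine ⟨Metric.diam K, Metric.diam_nonneg, ∅, ⟨by simp, by simp, by simp⟩, by simp, ?_⟩
    intro c hc
    have hcK : c.image ⊆ K := by
      rcases hc with hc | hc
      · exact (F.2.2.1 c hc.1).2
      · exact (G.2.2.1 c hc.1).2
    have h1 : c.diam ≤ Metric.diam K := Metric.diam_mono hcK hK.isBounded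
    have h2 : 0 ≤ Metric.diam K := Metric.diam_nonneg
    linarith
  obtain ⟨ρ, ⟨hρ0, π, hπ, hd, hun⟩, hρ⟩ := exists_lt_of_csInf_lt hne hG
  have hρr := hρ.trans_le (min_le_left _ _)
  have hρε := hρ.trans_le (min_le_right _ _)
  obtain ⟨s, u, v, t, x, y, -, -, -, -, -, -, -, h8, -⟩ := id hb
  have hdiam : ε ≤ γ'.cls.diam := by
    rw [diam_cls]
    exact h8.trans (dist_le_D _ _ _)
  obtain ⟨p, hp, hp2⟩ : ∃ p ∈ π, p.2 = γ'.cls := by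
    by_contra hcon
    push Not at hcon
    have := hun γ'.cls (Or.inr ⟨hc', hcon⟩)
    linarith
  obtain ⟨γ, hγ⟩ := exists_rep p.1
  have hdist : LoopClass.dist p.1 γ'.cls ≤ ρ := hp2 ▸ hd p hp
  refine hrS p.1 ⟨(hπ.1 p hp).1, ?_⟩ γ'.cls (hdist.trans_lt hρr) ⟨γ', rfl, hb⟩
  rw [← hγ] at hdist ⊢
  obtain ⟨φ, -, hφ⟩ := (lclose_of_dist_lt (hdist.trans_lt hρε)).symm
  have t1 := dist_triangle4 (γ'.toFun u) (γ.toFun (φ u)) (γ.toFun (φ v)) (γ'.toFun v)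
  rw [dist_comm (γ.toFun (φ v))] at t1
  have t2 := dist_le_D γ (φ u) (φ v)
  rw [diam_cls]
  linarith [hφ u, hφ v]

/-- For every compact `K ⊂ ℂ`, the set of collections all of whose loops
are simple is a Borel subset of `(X(K), d_X)`. -/
theorem simpleness_is_borel (K : Set ℂ) (hK : IsCompact K) :
    MeasurableSet {F : XSpace K | ∀ c ∈ F.1, c.IsSimple} := by
  have h : {F : XSpace K | ∀ c ∈ F.1, c.IsSimple} =
      ⋂ n : ℕ, {F : XSpace K | ∀ c ∈ F.1, ¬ CBad (1 / ((n : ℝ) + 1)) c} := by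
    ext F
    simp only [mem_ofPred_eq, mem_iInter]
    constructor
    · exact fun hF n c hc => not_cbad_of_simple (by positivity) (hF c hc)
    · exact fun hF c hc => simple_of_not_cbad (F.2.2.1 c hc).1 fun n => hF n c hc
  rw [h]
  exact MeasurableSet.iInter fun n =>
    MeasurableSpace.measurableSet_generateFrom (isOpen_not_cbad hK (by positivity))
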